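/- Let a budget profile be given (integer m ≥ 1, strictly increasing positive real privacy budgets ε_1 < ε_2 < ⋯ < ε_m, positive integer counts n_1, …, n_m, n = n_1 + ⋯ + n_m, Z = (n − n_m)(n − n_m + 1/4)), let d ≥ 1 be an integer, and take sensitivity I = 1/d. Then the OBS error of the (1/2)-scaled profile satisfies errO_{1/d}(1/2) ≤ min( 8/(d² ε_1²) , Z + 8/(d² ε_m²) ). (This is the bound on the average dissimilarity-calculation error ērr_DC per time slot in the proofs of Theorems 2 and 3: the dissimilarity query has sensitivity 1/d and each user contributes budget ε_i/(2w_i), i.e., the per-window average budgets halved.) -/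

import Mathlib

open Finset

/-- Sampling probability p_k(θ) = (e^{ε_k} − 1)/(e^{θ} − 1). -/
noncomputable def samplingP {m : ℕ} (ε : Fin m → ℝ) (k : Fin m) (θ : ℝ) : ℝ :=
  (Real.exp (ε k) - 1) / (Real.exp θ - 1)

/-- Sampling error err_s(θ). -/
noncomputable def errS {m : ℕ} (ε : Fin m → ℝ) (nn : Fin m → ℕ) (θ : ℝ) : ℝ :=
  (∑ k, if ε k < θ then (nn k : ℝ) * samplingP ε k θ * (1 - samplingP ε k θ) else 0)
    + (∑ k, if ε k < θ then (nn k : ℝ) * (1 - samplingP ε k θ) else 0) ^ 2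

/-- Noise error err_dp(θ) = 2I²/θ². -/
noncomputable def errDP (I θ : ℝ) : ℝ := 2 * I ^ 2 / θ ^ 2

/-- Total error err(θ) = err_s(θ) + err_dp(θ). -/
noncomputable def errTot {m : ℕ} (ε : Fin m → ℝ) (nn : Fin m → ℕ) (I θ : ℝ) : ℝ :=
  errS ε nn θ + errDP I θ

/-- OBS error: errO_I = min_{1 ≤ j ≤ m} err(ε_j). -/
noncomputable def errO {m : ℕ} (hm : 0 < m) (ε : Fin m → ℝ) (nn : Fin m → ℕ) (I : ℝ) : ℝ :=
  Finset.univ.inf' (Finset.univ_nonempty_iff.mpr (Fin.pos_iff_nonempty.mp hm))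
    (fun j => errTot ε nn I (ε j))

/-- Index of the smallest budget ε_1. -/
def firstIdx {m : ℕ} (hm : 0 < m) : Fin m := ⟨0, hm⟩

/-- Index of the largest budget ε_m. -/
def lastIdx {m : ℕ} (hm : 0 < m) : Fin m := ⟨m - 1, Nat.sub_lt hm Nat.one_pos⟩

/-- Z = (n − n_m)(n − n_m + 1/4). -/
noncomputable def Zval {m : ℕ} (hm : 0 < m) (nn : Fin m → ℕ) : ℝ :=
  ((∑ j, (nn j : ℝ)) - nn (lastIdx hm)) * ((∑ j, (nn j : ℝ)) - nn (lastIdx hm) + 1 / 4)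

/-- N-th square harmonic number H²_N = Σ_{k=1}^N 1/k². -/
noncomputable def sqHarmonic (N : ℕ) : ℝ := ∑ k ∈ Finset.Icc 1 N, 1 / (k : ℝ) ^ 2

/-! Two thresholds already suffice. At the smallest budget no user lies below the threshold, so only
the noise error is left. At the largest budget the `n - n_m` remaining users each contribute at most
`1/4` to the variance term, as `p (1 - p) ≤ 1/4`, and at most `1` to the bias that gets squared, so
the sampling error is at most `(n - n_m) (n - n_m) + (n - n_m) / 4 = Z`. -/

section WeightedSums

variable {ι R : Type*} {s : Finset ι} {w p : ι → R}

lemma sum_mul_mul_one_sub_le [Field R] [LinearOrder R] [IsStrictOrderedRing R]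
    (hw : ∀ i ∈ s, 0 ≤ w i) :
    ∑ i ∈ s, w i * p i * (1 - p i) ≤ (∑ i ∈ s, w i) * (1 / 4) := by
  rw [sum_mul]
  refine sum_le_sum fun i hi => ?_
  have hp : p i * (1 - p i) ≤ 1 / 4 := by linarith [sq_nonneg (p i - 1 / 2)]
  rw [mul_assoc]
  exact mul_le_mul_of_nonneg_left hp (hw i hi)

lemma sq_sum_mul_one_sub_le [Ring R] [PartialOrder R] [IsOrderedRing R]
    (hw : ∀ i ∈ s, 0 ≤ w i) (hp : ∀ i ∈ s, p i ∈ Set.Icc 0 1) :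
    (∑ i ∈ s, w i * (1 - p i)) ^ 2 ≤ (∑ i ∈ s, w i) ^ 2 := by
  have hnonneg : 0 ≤ ∑ i ∈ s, w i * (1 - p i) :=
    sum_nonneg fun i hi => mul_nonneg (hw i hi) (sub_nonneg.mpr (hp i hi).2)
  have hle : ∑ i ∈ s, w i * (1 - p i) ≤ ∑ i ∈ s, w i :=
    sum_le_sum fun i hi => mul_le_of_le_one_right (hw i hi) (sub_le_self 1 (hp i hi).1)
  exact pow_le_pow_left₀ hnonneg hle 2

end WeightedSums

section SamplingError

variable {m : ℕ} {ε : Fin m → ℝ} {θ : ℝ}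

/-- The number of users whose budget lies strictly below the threshold `θ`, i.e. of those who are
sampled with probability less than one. -/
noncomputable def countBelow (ε : Fin m → ℝ) (nn : Fin m → ℕ) (θ : ℝ) : ℕ :=
  ∑ k with ε k < θ, nn k

lemma countBelow_add_le_sum (ε : Fin m → ℝ) (nn : Fin m → ℕ) (j : Fin m) :
    countBelow ε nn (ε j) + nn j ≤ ∑ k, nn k := by
  have hsub : ({k | ε k < ε j} : Finset (Fin m)) ⊆ univ.erase j := fun k hk =>
    mem_erase.mpr ⟨ne_of_apply_ne ε (mem_filter.mp hk).2.ne, mem_univ k⟩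
  calc countBelow ε nn (ε j) + nn j ≤ (∑ k ∈ univ.erase j, nn k) + nn j :=
        Nat.add_le_add_right (sum_le_sum_of_subset hsub) _
    _ = ∑ k, nn k := sum_erase_add _ _ (mem_univ j)

lemma samplingP_mem_Icc {k : Fin m} (hk : 0 ≤ ε k) (hkθ : ε k ≤ θ) :
    samplingP ε k θ ∈ Set.Icc 0 1 :=
  unitInterval.div_mem (sub_nonneg.mpr (Real.one_le_exp hk))
    (sub_nonneg.mpr (Real.one_le_exp (hk.trans hkθ)))
    (sub_le_sub_right (Real.exp_le_exp.mpr hkθ) 1)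

lemma errS_eq_zero_of_forall_le (nn : Fin m → ℕ) (h : ∀ k, θ ≤ ε k) : errS ε nn θ = 0 := by
  simp [errS, fun k => (h k).not_gt]

lemma errS_le_countBelow (nn : Fin m → ℕ) (hε : ∀ k, 0 ≤ ε k) (θ : ℝ) :
    errS ε nn θ ≤ countBelow ε nn θ * (countBelow ε nn θ + 1 / 4) := by
  have hcount : ∀ k ∈ ({k | ε k < θ} : Finset (Fin m)), (0 : ℝ) ≤ nn k :=
    fun k _ => (nn k).cast_nonneg
  have hp : ∀ k ∈ ({k | ε k < θ} : Finset (Fin m)), samplingP ε k θ ∈ Set.Icc 0 1 :=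
    fun k hk => samplingP_mem_Icc (hε k) (mem_filter.mp hk).2.le
  rw [errS, ← sum_filter, ← sum_filter, countBelow, Nat.cast_sum]
  calc _ ≤ (∑ k with ε k < θ, (nn k : ℝ)) * (1 / 4) + (∑ k with ε k < θ, (nn k : ℝ)) ^ 2 :=
        add_le_add (sum_mul_mul_one_sub_le hcount) (sq_sum_mul_one_sub_le hcount hp)
    _ = _ := by ring

lemma errS_apply_lastIdx_le_Zval (hm : 0 < m) (nn : Fin m → ℕ) (hε : ∀ k, 0 ≤ ε k) :
    errS ε nn (ε (lastIdx hm)) ≤ Zval hm nn := by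
  have hcount : (countBelow ε nn (ε (lastIdx hm)) : ℝ) ≤ (∑ k, (nn k : ℝ)) - nn (lastIdx hm) :=
    le_sub_iff_add_le.mpr (mod_cast countBelow_add_le_sum ε nn (lastIdx hm))
  refine (errS_le_countBelow nn hε _).trans ?_
  rw [Zval]
  gcongr
  exact (Nat.cast_nonneg _).trans hcount

end SamplingError

lemma errO_le_errTot {m : ℕ} (hm : 0 < m) (ε : Fin m → ℝ) (nn : Fin m → ℕ) (I : ℝ) (j : Fin m) :
    errO hm ε nn I ≤ errTot ε nn I (ε j) :=
  inf'_le _ (mem_univ j)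

lemma errDP_one_div_half_mul (d x : ℝ) : errDP (1 / d) (1 / 2 * x) = 8 / (d ^ 2 * x ^ 2) := by
  rw [errDP]
  ring

theorem dc_error_bound_general {m : ℕ} (hm : 0 < m) {ε : Fin m → ℝ} (nn : Fin m → ℕ)
    (hpos : ∀ j, 0 < ε j) (hmono : Monotone ε) (I : ℝ) :
    errO hm ε nn I ≤
      min (errDP I (ε (firstIdx hm))) (Zval hm nn + errDP I (ε (lastIdx hm))) := by
  refine le_min ?_ ?_
  · have hfirst : errS ε nn (ε (firstIdx hm)) = 0 :=
      errS_eq_zero_of_forall_le nn fun k => hmono (Nat.zero_le k)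
    calc errO hm ε nn I ≤ errTot ε nn I (ε (firstIdx hm)) := errO_le_errTot hm ε nn I _
      _ = errDP I (ε (firstIdx hm)) := by rw [errTot, hfirst, zero_add]
  · calc errO hm ε nn I ≤ errTot ε nn I (ε (lastIdx hm)) := errO_le_errTot hm ε nn I _
      _ ≤ Zval hm nn + errDP I (ε (lastIdx hm)) :=
        add_le_add_left (errS_apply_lastIdx_le_Zval hm nn fun k => (hpos k).le) _

/-- Bound on the average dissimilarity-calculation error per time slot in the proofs
of Theorems 2 and 3: sensitivity 1/d, budgets halved. -/
theorem dc_error_bound (m : ℕ) (hm : 0 < m) (ε : Fin m → ℝ) (nn : Fin m → ℕ)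
    (hpos : ∀ j, 0 < ε j) (hmono : StrictMono ε) (hcount : ∀ j, 0 < nn j)
    (d : ℕ) (hd : 1 ≤ d) :
    errO hm (fun j => (1 / 2 : ℝ) * ε j) nn (1 / (d : ℝ)) ≤
      min (8 / ((d : ℝ) ^ 2 * (ε (firstIdx hm)) ^ 2))
        (Zval hm nn + 8 / ((d : ℝ) ^ 2 * (ε (lastIdx hm)) ^ 2)) := by
  simpa only [errDP_one_div_half_mul] using
    dc_error_bound_general hm nn (fun j => mul_pos one_half_pos (hpos j))
      (hmono.monotone.const_mul one_half_pos.le) (1 / (d : ℝ))
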